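/- Let T > 0, let μ : ℝ³ → ℝ, let p : ℝ × ℝ³ → ℝ be continuously differentiable in the spatial variable, and let h : ℝ³ → ℝ be continuously differentiable. Suppose u : ℝ × ℝ³ → ℝ is twice continuously differentiable jointly in (t,x) and three times continuously differentiable in x on (0,T) × ℝ³ and solves the HJB equation ∂_t u − (1/2)|∇u|² + (1/2) Δu − p = 0 on (0,T) × ℝ³ with u(T,x) = h(x), and suppose ρ : ℝ × ℝ³ → ℝ is continuously differentiable in time and twice continuously differentiable in space and solves the Fokker–Planck equation ∂_t ρ − ∇·(ρ ∇u) = (1/2) Δρ on (0,T) × ℝ³ with ρ(0,x) = μ(x). Then the time-reversed pair ρ̃(t,x) := ρ(T−t,x), ṽ(t,x) := ∇u(T−t,x) solves the system (∂_t + ṽ·∇)ṽ = −∇p̃ + (1/2) Δṽ and ∂_t ρ̃ + ∇·(ρ̃ ṽ) + (1/2) Δρ̃ = 0 on (0,T) × ℝ³, with ṽ(0,x) = ∇h(x) and ρ̃(T,x) = μ(x), where p̃(t,x) := p(T−t,x). -/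

import Mathlib

open Set MeasureTheory

noncomputable section

/-- 3-dimensional Euclidean space. -/
abbrev E3 : Type := EuclideanSpace ℝ (Fin 3)

/-- Time partial derivative of a function on `ℝ × ℝ³`. -/
def dt1 (f : ℝ × E3 → ℝ) : ℝ × E3 → ℝ := fun p => deriv (fun s => f (s, p.2)) p.1

/-- Spatial partial derivative in the `i`-th coordinate direction. -/
def dx1 (i : Fin 3) (f : ℝ × E3 → ℝ) : ℝ × E3 → ℝ :=
  fun p => fderiv ℝ (fun y => f (p.1, y)) p.2 (EuclideanSpace.single i 1)

/-- Spatial Laplacian `Δf = ∑ i, ∂_i² f`. -/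
def lap1 (f : ℝ × E3 → ℝ) : ℝ × E3 → ℝ := fun p => ∑ i, dx1 i (dx1 i f) p

/-!
Differentiate the HJB equation in the direction `v`. The derivative commutes with `∂_t` and with
the Laplacian, and since the velocity is the gradient of `u`, symmetry of second derivatives turns
`∂_v (|∇u|² / 2)` into the transport term `(∇u · ∇) ∂_v u`. Reversing time changes the sign of
`∂_t` only, which produces the momentum equation from the differentiated HJB equation and the
continuity equation from the Fokker–Planck equation.
-/

open scoped Topology

variable {E : Type*} [NormedAddCommGroup E] [NormedSpace ℝ E]
  {F : Type*} [NormedAddCommGroup F] [NormedSpace ℝ F] {ι : Type*}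

/-- The partial derivative `∂_t f` of a function of time and space. -/
def timeDeriv (f : ℝ × E → F) : ℝ × E → F := fun q => deriv (fun s => f (s, q.2)) q.1

/-- The spatial derivative `∂_v f` of a function of time and space in the direction `v`. -/
def spatialDeriv (v : E) (f : ℝ × E → F) : ℝ × E → F :=
  fun q => fderiv ℝ (fun y => f (q.1, y)) q.2 v

/-- The sum of squares `∑ i, ∂_{e i}² f`, which is the spatial Laplacian of `f` when `e` is an
orthonormal basis. -/
def spatialLaplacian [Fintype ι] (e : ι → E) (f : ℝ × E → F) : ℝ × E → F :=
  fun q => ∑ i, spatialDeriv (e i) (spatialDeriv (e i) f) q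

/-- The time reversal `(t, x) ↦ f (T - t, x)` of a function of time and space. -/
def timeReversal (T : ℝ) (f : ℝ × E → F) : ℝ × E → F := fun q => f (T - q.1, q.2)

/-- `u` is a classical solution of the Hamilton–Jacobi–Bellman equation
`∂_t u - |∇u|² / 2 + ν Δu - p = 0` on `(0, T) × E`, where `∇` and `Δ` are taken along the
directions `e`. -/
structure IsHJBSolution [Fintype ι] (e : ι → E) (ν T : ℝ) (p u : ℝ × E → ℝ) : Prop where
  contDiffOn : ContDiffOn ℝ 2 u (Ioo 0 T ×ˢ univ)
  contDiff_space : ∀ t ∈ Ioo 0 T, ContDiff ℝ 3 fun y => u (t, y)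
  equation : ∀ t ∈ Ioo 0 T, ∀ x,
    timeDeriv u (t, x) - (1 / 2) * ∑ i, spatialDeriv (e i) u (t, x) ^ 2
      + ν * spatialLaplacian e u (t, x) - p (t, x) = 0

/-- `ρ` is a classical solution of the Fokker–Planck equation `∂_t ρ - ∇·(ρ ∇u) = ν Δρ` on
`(0, T) × E`, where `∇` and `Δ` are taken along the directions `e`. -/
structure IsFokkerPlanckSolution [Fintype ι] (e : ι → E) (ν T : ℝ) (u ρ : ℝ × E → ℝ) :
    Prop where
  contDiffOn_time : ∀ x, ContDiffOn ℝ 1 (fun t => ρ (t, x)) (Ioo 0 T)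
  contDiff_space : ∀ t ∈ Ioo 0 T, ContDiff ℝ 2 fun y => ρ (t, y)
  equation : ∀ t ∈ Ioo 0 T, ∀ x,
    timeDeriv ρ (t, x) - ∑ i, spatialDeriv (e i) (fun q => ρ q * spatialDeriv (e i) u q) (t, x)
      = ν * spatialLaplacian e ρ (t, x)

/-- `(ρ, v)` is a classical solution of the Navier–Stokes-type system
`(∂_t + v·∇) v = -∇p + ν Δv`, `∂_t ρ + ∇·(ρ v) + ν Δρ = 0` on `(0, T) × E`. The velocity is given
by its components `v i` along the directions `e`. -/
structure IsNavierStokesTypeSolution [Fintype ι] (e : ι → E) (ν T : ℝ) (p ρ : ℝ × E → ℝ)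
    (v : ι → ℝ × E → ℝ) : Prop where
  velocity_contDiffOn : ∀ i, ContDiffOn ℝ 1 (v i) (Ioo 0 T ×ˢ univ)
  velocity_contDiff_space : ∀ t ∈ Ioo 0 T, ∀ i, ContDiff ℝ 2 fun y => v i (t, y)
  density_contDiffOn_time : ∀ x, ContDiffOn ℝ 1 (fun t => ρ (t, x)) (Ioo 0 T)
  density_contDiff_space : ∀ t ∈ Ioo 0 T, ContDiff ℝ 2 fun y => ρ (t, y)
  momentum_equation : ∀ t ∈ Ioo 0 T, ∀ x i,
    timeDeriv (v i) (t, x) + ∑ j, v j (t, x) * spatialDeriv (e j) (v i) (t, x)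
      = -spatialDeriv (e i) p (t, x) + ν * spatialLaplacian e (v i) (t, x)
  continuity_equation : ∀ t ∈ Ioo 0 T, ∀ x,
    timeDeriv ρ (t, x) + ∑ i, spatialDeriv (e i) (fun q => ρ q * v i q) (t, x)
      + ν * spatialLaplacian e ρ (t, x) = 0

theorem fderiv_fderiv_apply_comm {f : E → F} {x : E} (hf : ContDiffAt ℝ 2 f x) (v w : E) :
    fderiv ℝ (fun y => fderiv ℝ f y v) x w = fderiv ℝ (fun y => fderiv ℝ f y w) x v := by
  have hdf : DifferentiableAt ℝ (fderiv ℝ f) x :=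
    (hf.fderiv_right (m := 1) le_rfl).differentiableAt one_ne_zero
  have second_deriv_apply (a b : E) :
      fderiv ℝ (fun y => fderiv ℝ f y a) x b = fderiv ℝ (fderiv ℝ f) x b a := by
    simp [fderiv_clm_apply hdf (differentiableAt_const a)]
  rw [second_deriv_apply, second_deriv_apply]
  exact (hf.isSymmSndFDerivAt (by simp)).eq w v

theorem eventually_differentiableAt_of_contDiffAt {f : E → F} {x : E}
    (hf : ContDiffAt ℝ 1 f x) :
    ∀ᶠ y in 𝓝 x, DifferentiableAt ℝ f y :=
  (hf.eventually (by simp)).mono fun _ hy => hy.differentiableAt one_ne_zero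

section JointlySmooth

variable {f : ℝ × E → F} {q : ℝ × E} {m n : WithTop ℕ∞}

theorem timeDeriv_eq_fderiv (hf : DifferentiableAt ℝ f q) :
    timeDeriv f q = fderiv ℝ f q (1, 0) :=
  (hf.hasFDerivAt.comp_hasDerivAt q.1
    ((hasDerivAt_id q.1).prodMk (hasDerivAt_const q.1 q.2))).deriv

theorem spatialDeriv_eq_fderiv (hf : DifferentiableAt ℝ f q) (v : E) :
    spatialDeriv v f q = fderiv ℝ f q (0, v) := by
  have hslice : HasFDerivAt (fun y => f (q.1, y))
      (fderiv ℝ f q ∘L ContinuousLinearMap.inr ℝ ℝ E) q.2 :=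
    hf.hasFDerivAt.comp q.2 (hasFDerivAt_prodMk_right q.1 q.2)
  simp [spatialDeriv, hslice.fderiv]

theorem timeDeriv_eventuallyEq_fderiv (hf : ContDiffAt ℝ 1 f q) :
    timeDeriv f =ᶠ[𝓝 q] fun r => fderiv ℝ f r (1, 0) :=
  (eventually_differentiableAt_of_contDiffAt hf).mono fun _ hr => timeDeriv_eq_fderiv hr

theorem spatialDeriv_eventuallyEq_fderiv (hf : ContDiffAt ℝ 1 f q) (v : E) :
    spatialDeriv v f =ᶠ[𝓝 q] fun r => fderiv ℝ f r (0, v) :=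
  (eventually_differentiableAt_of_contDiffAt hf).mono fun _ hr => spatialDeriv_eq_fderiv hr v

theorem contDiffAt_timeDeriv (hf : ContDiffAt ℝ n f q) (hmn : m + 1 ≤ n) :
    ContDiffAt ℝ m (timeDeriv f) q :=
  ((hf.fderiv_right hmn).clm_apply contDiffAt_const).congr_of_eventuallyEq
    (timeDeriv_eventuallyEq_fderiv (hf.of_le (le_add_self.trans hmn)))

theorem contDiffAt_spatialDeriv (hf : ContDiffAt ℝ n f q) (hmn : m + 1 ≤ n) (v : E) :
    ContDiffAt ℝ m (spatialDeriv v f) q :=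
  ((hf.fderiv_right hmn).clm_apply contDiffAt_const).congr_of_eventuallyEq
    (spatialDeriv_eventuallyEq_fderiv (hf.of_le (le_add_self.trans hmn)) v)

theorem timeDeriv_spatialDeriv_comm (hf : ContDiffAt ℝ 2 f q) (v : E) :
    timeDeriv (spatialDeriv v f) q = spatialDeriv v (timeDeriv f) q := by
  have hf₁ : ContDiffAt ℝ 1 f q := hf.of_le one_le_two
  calc timeDeriv (spatialDeriv v f) q
      = fderiv ℝ (spatialDeriv v f) q (1, 0) :=
        timeDeriv_eq_fderiv ((contDiffAt_spatialDeriv hf le_rfl v).differentiableAt one_ne_zero)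
    _ = fderiv ℝ (fun r => fderiv ℝ f r (0, v)) q (1, 0) := by
        rw [(spatialDeriv_eventuallyEq_fderiv hf₁ v).fderiv_eq]
    _ = fderiv ℝ (fun r => fderiv ℝ f r (1, 0)) q (0, v) := fderiv_fderiv_apply_comm hf _ _
    _ = fderiv ℝ (timeDeriv f) q (0, v) := by
        rw [(timeDeriv_eventuallyEq_fderiv hf₁).fderiv_eq]
    _ = spatialDeriv v (timeDeriv f) q :=
        (spatialDeriv_eq_fderiv
          ((contDiffAt_timeDeriv hf le_rfl).differentiableAt one_ne_zero) v).symm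

end JointlySmooth

section SpatiallySmooth

variable {t : ℝ}

theorem contDiff_spatialDeriv_slice {m n : WithTop ℕ∞} {f : ℝ × E → F}
    (hf : ContDiff ℝ n fun y => f (t, y)) (hmn : m + 1 ≤ n) (v : E) :
    ContDiff ℝ m fun y => spatialDeriv v f (t, y) :=
  (hf.fderiv_right hmn).clm_apply contDiff_const

theorem spatialDeriv_comm {f : ℝ × E → F} {x : E}
    (hf : ContDiffAt ℝ 2 (fun y => f (t, y)) x) (v w : E) :
    spatialDeriv v (spatialDeriv w f) (t, x) = spatialDeriv w (spatialDeriv v f) (t, x) :=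
  fderiv_fderiv_apply_comm hf w v

variable [Fintype ι]

theorem spatialDeriv_sum {g : ι → ℝ × E → F} {x : E}
    (hg : ∀ i, DifferentiableAt ℝ (fun y => g i (t, y)) x) (v : E) :
    spatialDeriv v (fun q => ∑ i, g i q) (t, x) = ∑ i, spatialDeriv v (g i) (t, x) := by
  simp [spatialDeriv, fderiv_fun_sum fun i _ => hg i]

variable (e : ι → E)

theorem contDiff_spatialLaplacian_slice {m n : WithTop ℕ∞} {f : ℝ × E → F}
    (hf : ContDiff ℝ n fun y => f (t, y)) (hmn : m + 1 + 1 ≤ n) :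
    ContDiff ℝ m fun y => spatialLaplacian e f (t, y) :=
  ContDiff.sum fun i _ =>
    contDiff_spatialDeriv_slice (contDiff_spatialDeriv_slice hf hmn (e i)) le_rfl (e i)

theorem spatialDeriv_spatialLaplacian_comm {f : ℝ × E → F}
    (hf : ContDiff ℝ 3 fun y => f (t, y)) (v x : E) :
    spatialDeriv v (spatialLaplacian e f) (t, x)
      = spatialLaplacian e (spatialDeriv v f) (t, x) := by
  have hf₁ (i : ι) : ContDiff ℝ 2 fun y => spatialDeriv (e i) f (t, y) :=
    contDiff_spatialDeriv_slice hf (by norm_num) (e i)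
  have hf₂ (i : ι) :
      DifferentiableAt ℝ (fun y => spatialDeriv (e i) (spatialDeriv (e i) f) (t, y)) x :=
    (contDiff_spatialDeriv_slice (hf₁ i) le_rfl (e i)).differentiable one_ne_zero x
  have inner_comm (i : ι) : (fun y => spatialDeriv v (spatialDeriv (e i) f) (t, y))
      = fun y => spatialDeriv (e i) (spatialDeriv v f) (t, y) :=
    funext fun y => spatialDeriv_comm (hf.of_le (by norm_num)).contDiffAt v (e i)
  calc spatialDeriv v (spatialLaplacian e f) (t, x)
      = ∑ i, spatialDeriv v (spatialDeriv (e i) (spatialDeriv (e i) f)) (t, x) :=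
        spatialDeriv_sum hf₂ v
    _ = ∑ i, spatialDeriv (e i) (spatialDeriv v (spatialDeriv (e i) f)) (t, x) :=
        Finset.sum_congr rfl fun i _ => spatialDeriv_comm (hf₁ i).contDiffAt v (e i)
    _ = spatialLaplacian e (spatialDeriv v f) (t, x) :=
        Finset.sum_congr rfl fun i _ =>
          congrArg (fun g => fderiv ℝ g x (e i)) (inner_comm i)

theorem spatialDeriv_sum_sq_spatialDeriv {f : ℝ × E → ℝ} {x : E}
    (hf : ContDiffAt ℝ 2 (fun y => f (t, y)) x) (v : E) :
    spatialDeriv v (fun q => ∑ j, spatialDeriv (e j) f q ^ 2) (t, x)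
      = 2 * ∑ j, spatialDeriv (e j) f (t, x) * spatialDeriv (e j) (spatialDeriv v f) (t, x) := by
  have hderiv (j : ι) : DifferentiableAt ℝ (fun y => spatialDeriv (e j) f (t, y)) x :=
    ((hf.fderiv_right (m := 1) le_rfl).clm_apply contDiffAt_const).differentiableAt one_ne_zero
  have hsq (j : ι) : spatialDeriv v (fun q => spatialDeriv (e j) f q ^ 2) (t, x)
      = 2 * spatialDeriv (e j) f (t, x) * spatialDeriv v (spatialDeriv (e j) f) (t, x) :=
    (congrArg (· v) ((hderiv j).hasFDerivAt.pow 2).fderiv).trans (by simp [spatialDeriv])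
  calc spatialDeriv v (fun q => ∑ j, spatialDeriv (e j) f q ^ 2) (t, x)
      = ∑ j, 2 * spatialDeriv (e j) f (t, x) * spatialDeriv v (spatialDeriv (e j) f) (t, x) :=
        (spatialDeriv_sum (fun j => (hderiv j).pow 2) v).trans
          (Finset.sum_congr rfl fun j _ => hsq j)
    _ = 2 * ∑ j, spatialDeriv (e j) f (t, x) * spatialDeriv (e j) (spatialDeriv v f) (t, x) := by
        simp only [spatialDeriv_comm hf v, mul_assoc, Finset.mul_sum]

end SpatiallySmooth

section TimeReversal

theorem sub_mem_Ioo_zero {α : Type*} [AddCommGroup α] [PartialOrder α] [IsOrderedAddMonoid α]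
    {a b : α} (ha : a ∈ Ioo 0 b) : b - a ∈ Ioo 0 b :=
  ⟨sub_pos.2 ha.2, sub_lt_self b ha.1⟩

variable {T : ℝ}

theorem timeDeriv_timeReversal {X : Type*} (f : ℝ × X → F) (t : ℝ) (x : X) :
    timeDeriv (timeReversal T f) (t, x) = -timeDeriv f (T - t, x) :=
  deriv_comp_const_sub (f := fun s => f (s, x)) T t

theorem contDiffOn_timeReversal {n : WithTop ℕ∞} {f : ℝ × E → F}
    (hf : ContDiffOn ℝ n f (Ioo 0 T ×ˢ univ)) :
    ContDiffOn ℝ n (timeReversal T f) (Ioo 0 T ×ˢ univ) :=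
  hf.comp (by fun_prop) fun _ hq => ⟨sub_mem_Ioo_zero hq.1, mem_univ _⟩

end TimeReversal

section Solutions

variable [Fintype ι] {e : ι → E} {ν T : ℝ} {p u ρ : ℝ × E → ℝ}

theorem IsHJBSolution.contDiffAt (hu : IsHJBSolution e ν T p u) {t : ℝ} (ht : t ∈ Ioo 0 T)
    (x : E) : ContDiffAt ℝ 2 u (t, x) :=
  hu.contDiffOn.contDiffAt ((isOpen_Ioo.prod isOpen_univ).mem_nhds ⟨ht, mem_univ x⟩)

theorem IsHJBSolution.spatialDeriv_pressure (hu : IsHJBSolution e ν T p u) {t : ℝ}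
    (ht : t ∈ Ioo 0 T) (v x : E) :
    spatialDeriv v p (t, x) = spatialDeriv v (timeDeriv u) (t, x)
      - (1 / 2) * spatialDeriv v (fun q => ∑ j, spatialDeriv (e j) u q ^ 2) (t, x)
      + ν * spatialDeriv v (spatialLaplacian e u) (t, x) := by
  have hslice : ContDiff ℝ 3 fun y => u (t, y) := hu.contDiff_space t ht
  have htime : DifferentiableAt ℝ (fun y => timeDeriv u (t, y)) x :=
    ((contDiffAt_timeDeriv (hu.contDiffAt ht x) le_rfl).differentiableAt one_ne_zero).comp x
      (by fun_prop)
  have hsq : DifferentiableAt ℝ (fun y => ∑ j, spatialDeriv (e j) u (t, y) ^ 2) x :=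
    DifferentiableAt.fun_sum fun j _ =>
      ((contDiff_spatialDeriv_slice (m := 2) hslice (by norm_num) (e j)).differentiable
        two_ne_zero x).pow 2
  have hlap : DifferentiableAt ℝ (fun y => spatialLaplacian e u (t, y)) x :=
    (contDiff_spatialLaplacian_slice (m := 1) e hslice (by norm_num)).differentiable one_ne_zero x
  have pressure_eq : (fun y => p (t, y)) = fun y => timeDeriv u (t, y)
      - (1 / 2) * ∑ j, spatialDeriv (e j) u (t, y) ^ 2 + ν * spatialLaplacian e u (t, y) :=
    funext fun y => by linarith [hu.equation t ht y]
  have pressure_deriv := (htime.hasFDerivAt.sub (hsq.hasFDerivAt.const_mul (1 / 2))).add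
    (hlap.hasFDerivAt.const_mul ν)
  exact (congrArg (fun g => fderiv ℝ g x v) pressure_eq).trans
    (congrArg (· v) pressure_deriv.fderiv)

theorem IsHJBSolution.spatialDeriv_equation (hu : IsHJBSolution e ν T p u) {t : ℝ}
    (ht : t ∈ Ioo 0 T) (v x : E) :
    timeDeriv (spatialDeriv v u) (t, x)
        - ∑ j, spatialDeriv (e j) u (t, x) * spatialDeriv (e j) (spatialDeriv v u) (t, x)
        + ν * spatialLaplacian e (spatialDeriv v u) (t, x)
      = spatialDeriv v p (t, x) := by
  have hslice : ContDiff ℝ 3 fun y => u (t, y) := hu.contDiff_space t ht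
  rw [hu.spatialDeriv_pressure ht, timeDeriv_spatialDeriv_comm (hu.contDiffAt ht x),
    spatialDeriv_sum_sq_spatialDeriv e (hslice.of_le (by norm_num)).contDiffAt,
    spatialDeriv_spatialLaplacian_comm e hslice]
  ring

theorem IsHJBSolution.timeReversal_momentum_equation (hu : IsHJBSolution e ν T p u) {t : ℝ}
    (ht : t ∈ Ioo 0 T) (v x : E) :
    timeDeriv (timeReversal T (spatialDeriv v u)) (t, x)
        + ∑ j, timeReversal T (spatialDeriv (e j) u) (t, x)
          * spatialDeriv (e j) (timeReversal T (spatialDeriv v u)) (t, x)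
      = -spatialDeriv v (timeReversal T p) (t, x)
        + ν * spatialLaplacian e (timeReversal T (spatialDeriv v u)) (t, x) := by
  have hdiff := hu.spatialDeriv_equation (sub_mem_Ioo_zero ht) v x
  rw [timeDeriv_timeReversal]
  -- Spatial operators commute with `timeReversal` definitionally.
  change _ + ∑ j, spatialDeriv (e j) u (T - t, x)
      * spatialDeriv (e j) (spatialDeriv v u) (T - t, x)
    = -spatialDeriv v p (T - t, x) + ν * spatialLaplacian e (spatialDeriv v u) (T - t, x)
  linarith

theorem IsFokkerPlanckSolution.timeReversal_continuity_equation
    (hρ : IsFokkerPlanckSolution e ν T u ρ) {t : ℝ} (ht : t ∈ Ioo 0 T) (x : E) :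
    timeDeriv (timeReversal T ρ) (t, x)
        + ∑ i, spatialDeriv (e i)
          (fun q => timeReversal T ρ q * timeReversal T (spatialDeriv (e i) u) q) (t, x)
        + ν * spatialLaplacian e (timeReversal T ρ) (t, x) = 0 := by
  have hFP := hρ.equation (T - t) (sub_mem_Ioo_zero ht) x
  rw [timeDeriv_timeReversal]
  change _ + ∑ i, spatialDeriv (e i) (fun q => ρ q * spatialDeriv (e i) u q) (T - t, x)
    + ν * spatialLaplacian e ρ (T - t, x) = 0
  linarith

theorem IsHJBSolution.isNavierStokesTypeSolution_timeReversal (hu : IsHJBSolution e ν T p u)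
    (hρ : IsFokkerPlanckSolution e ν T u ρ) :
    IsNavierStokesTypeSolution e ν T (timeReversal T p) (timeReversal T ρ)
      fun i => timeReversal T (spatialDeriv (e i) u) where
  velocity_contDiffOn i := contDiffOn_timeReversal fun q hq =>
    (contDiffAt_spatialDeriv (hu.contDiffAt hq.1 q.2) le_rfl (e i)).contDiffWithinAt
  velocity_contDiff_space t ht i :=
    contDiff_spatialDeriv_slice (hu.contDiff_space (T - t) (sub_mem_Ioo_zero ht)) (by norm_num)
      (e i)
  density_contDiffOn_time x :=
    (hρ.contDiffOn_time x).comp (by fun_prop) fun _ ht => sub_mem_Ioo_zero ht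
  density_contDiff_space t ht := hρ.contDiff_space (T - t) (sub_mem_Ioo_zero ht)
  momentum_equation _ ht x i := hu.timeReversal_momentum_equation ht (e i) x
  continuity_equation _ ht x := hρ.timeReversal_continuity_equation ht x

theorem stmt11_general {h μ : E → ℝ} (hu : IsHJBSolution e ν T p u) (hh : Differentiable ℝ h)
    (huterm : ∀ x, u (T, x) = h x) (hρ : IsFokkerPlanckSolution e ν T u ρ)
    (hρ0 : ∀ x, ρ (0, x) = μ x) :
    IsNavierStokesTypeSolution e ν T (timeReversal T p) (timeReversal T ρ)
        (fun i => timeReversal T (spatialDeriv (e i) u)) ∧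
      (∀ x, HasFDerivAt (fun y => timeReversal T u (0, y)) (fderiv ℝ h x) x) ∧
      ∀ x, timeReversal T ρ (T, x) = μ x := by
  have initial_potential : (fun y => timeReversal T u (0, y)) = h :=
    funext fun y => by simp [timeReversal, huterm]
  exact ⟨hu.isNavierStokesTypeSolution_timeReversal hρ,
    fun x => initial_potential ▸ (hh x).hasFDerivAt, fun x => by simp [timeReversal, hρ0]⟩

end Solutions

/-- If `u` solves the HJB equation `∂_t u − (1/2)|∇u|² + (1/2)Δu − p = 0`, `u(T,·) = h`,
and `ρ` solves the Fokker–Planck equation `∂_t ρ − ∇·(ρ∇u) = (1/2)Δρ`, `ρ(0,·) = μ`,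
then the time-reversed pair `ρ̃(t,x) = ρ(T−t,x)`, `ṽ(t,x) = ∇u(T−t,x)` solves the
Navier–Stokes-type system `(∂_t + ṽ·∇)ṽ = −∇p̃ + (1/2)Δṽ`,
`∂_t ρ̃ + ∇·(ρ̃ṽ) + (1/2)Δρ̃ = 0`, with `ṽ(0,·) = ∇h` and `ρ̃(T,·) = μ`. -/
theorem stmt11 (T : ℝ) (hT : 0 < T)
    (μ : E3 → ℝ) (p : ℝ × E3 → ℝ) (h : E3 → ℝ)
    (hp : ∀ t : ℝ, ContDiff ℝ 1 (fun y => p (t, y)))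
    (hh : ContDiff ℝ 1 h)
    (u : ℝ × E3 → ℝ)
    (hu2 : ContDiffOn ℝ 2 u (Ioo 0 T ×ˢ (univ : Set E3)))
    (hu3 : ∀ t ∈ Ioo (0:ℝ) T, ContDiff ℝ 3 (fun y => u (t, y)))
    (hHJB : ∀ t ∈ Ioo (0:ℝ) T, ∀ x : E3,
      dt1 u (t, x) - (1/2) * (∑ i, (dx1 i u (t, x))^2)
        + (1/2) * lap1 u (t, x) - p (t, x) = 0)
    (huterm : ∀ x : E3, u (T, x) = h x)
    (ρ : ℝ × E3 → ℝ)
    (hρt : ∀ x : E3, ContDiffOn ℝ 1 (fun t => ρ (t, x)) (Ioo 0 T))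
    (hρx : ∀ t ∈ Ioo (0:ℝ) T, ContDiff ℝ 2 (fun y => ρ (t, y)))
    (hFPK : ∀ t ∈ Ioo (0:ℝ) T, ∀ x : E3,
      dt1 ρ (t, x) - (∑ i, dx1 i (fun q => ρ q * dx1 i u q) (t, x))
        = (1/2) * lap1 ρ (t, x))
    (hρ0 : ∀ x : E3, ρ (0, x) = μ x) :
    -- (∂_t + ṽ·∇)ṽ = −∇p̃ + (1/2)Δṽ on (0,T)×ℝ³ (componentwise), ṽ = ∇u(T−·,·)
    (∀ t ∈ Ioo (0:ℝ) T, ∀ x : E3, ∀ i : Fin 3,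
      dt1 (fun q => dx1 i u (T - q.1, q.2)) (t, x)
        + (∑ j, dx1 j u (T - t, x) * dx1 j (fun q => dx1 i u (T - q.1, q.2)) (t, x))
        = - dx1 i p (T - t, x)
          + (1/2) * lap1 (fun q => dx1 i u (T - q.1, q.2)) (t, x)) ∧
    -- ∂_t ρ̃ + ∇·(ρ̃ ṽ) + (1/2)Δρ̃ = 0 on (0,T)×ℝ³
    (∀ t ∈ Ioo (0:ℝ) T, ∀ x : E3,
      dt1 (fun q => ρ (T - q.1, q.2)) (t, x)
        + (∑ i, dx1 i (fun q => ρ (T - q.1, q.2) * dx1 i u (T - q.1, q.2)) (t, x))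
        + (1/2) * lap1 (fun q => ρ (T - q.1, q.2)) (t, x) = 0) ∧
    -- ṽ(0,x) = ∇h(x) (componentwise)
    (∀ x : E3, ∀ i : Fin 3,
      dx1 i u (T - 0, x) = fderiv ℝ h x (EuclideanSpace.single i 1)) ∧
    -- ρ̃(T,x) = μ(x)
    (∀ x : E3, ρ (T - T, x) = μ x) := by
  obtain ⟨hNS, hv, hρT⟩ := stmt11_general (e := fun i => EuclideanSpace.single i 1)
    ⟨hu2, hu3, hHJB⟩ (hh.differentiable one_ne_zero) huterm ⟨hρt, hρx, hFPK⟩ hρ0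
  exact ⟨hNS.momentum_equation, hNS.continuity_equation,
    fun x i => congrArg (· (EuclideanSpace.single i 1)) (hv x).fderiv, hρT⟩
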